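/- Let f : [0,1) → [0,1) be the doubling map, Y = (0,1/2), Y_ℓ = (1/2 − 2^{−ℓ}, 1/2 − 2^{−(ℓ+1)}), R(x) = ℓ on Y_ℓ, F = f^R, and let a ∈ (0,1), φ(x) = (1−x)^a, Φ(x) = Σ_{k=0}^{ℓ−1} φ(f^k x) for x ∈ Y_ℓ. Then the induced skew-product has bounded twist: there exists C′ > 0 such that for every ℓ ∈ ℕ and every x ∈ Y_ℓ, |Φ′(x)|·2^{−ℓ} ≤ C′, i.e. ‖DΦ(x)·DF(x)^{−1}‖ is uniformly bounded on Y. Explicitly, since |φ′(x)·f′(x)^{−1}| ≤ (1/2)(1−x)^{−(1−s)} with s = 1−a ∈ (0,1), one may take any b ∈ (1, (1−a)^{−1}) and C′ = C″/(1 − 2^{−(1−b(1−a))}) for a suitable C″. -/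

import Mathlib

/-!
Put `t = 1/2 - x`. A point of `Y_ℓ` satisfies `2^{-(ℓ+1)} < t < 2^{-ℓ}`, and for `1 ≤ k ≤ ℓ` its orbit
is explicit: `f^k x = 1 - 2^k t` (`dbl_iterate`), as each step doubles the distance to the
endpoint `1`, once the first has carried `1/2 - t` to `1 - 2t`.
Hence `f^k` has derivative `2^k` at `x` and `1 - f^k x ≥ 2^k t > 2^{k-ℓ-1}` for all `k < ℓ`.
As `a < 1`, the `k`-th summand of `Φ'(x)·2^{-ℓ}` is at most `2^{k-ℓ} (2^{k-ℓ-1})^{a-1}`, which is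
`2 r^{ℓ-k+1}` with `r = 2^{-a}` (`term_bound`). The sum over `k` is dominated by a convergent
geometric series, giving the constant `C' = 2 / (1 - r)`.
-/

/-- The doubling map `f(x) = 2x mod 1`. -/
noncomputable def dbl (x : ℝ) : ℝ := Int.fract (2 * x)

/-- `a_ℓ = 1/2 − 2^{−ℓ}`, so that `Y_ℓ = (a_ℓ, a_{ℓ+1})`. -/
noncomputable def aPt (ℓ : ℕ) : ℝ := 1 / 2 - ((2 : ℝ) ^ ℓ)⁻¹

lemma dbl_one_sub {u : ℝ} (h0 : 0 < u) (h1 : 2 * u < 1) : dbl (1 - u) = 1 - 2 * u := by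
  unfold dbl
  rw [Int.fract_eq_iff]
  exact ⟨by linarith, by linarith, 1, by push_cast; ring⟩

/-- Explicit orbit of a point `y < 1/2`, valid as long as `2^k (1/2 - y) < 1`. It fails for `k = 0`:
the first step carries `1/2` to `1` (from the left), and only then is the distance to `1` doubled. -/
lemma dbl_iterate {y : ℝ} (hy : y < 1 / 2) {k : ℕ} (hk : 1 ≤ k)
    (h : (2 : ℝ) ^ k * (1 / 2 - y) < 1) : dbl^[k] y = 1 - 2 ^ k * (1 / 2 - y) := by
  induction k, hk using Nat.le_induction with
  | base =>
    simp only [Function.iterate_one, pow_one] at h ⊢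
    unfold dbl
    rw [Int.fract_eq_iff]
    exact ⟨by linarith, by linarith, 0, by push_cast; ring⟩
  | succ k hk ih =>
    have hpos : 0 < (2 : ℝ) ^ k * (1 / 2 - y) := mul_pos (by positivity) (by linarith)
    rw [pow_succ'] at h
    rw [Function.iterate_succ_apply', ih (by linarith), dbl_one_sub hpos (by linarith), pow_succ']
    ring

lemma hasDerivAt_dbl_iterate {x : ℝ} (hx : x < 1 / 2) (k : ℕ)
    (h : (2 : ℝ) ^ k * (1 / 2 - x) < 1) : HasDerivAt (dbl^[k]) (2 ^ k) x := by
  rcases Nat.eq_zero_or_pos k with rfl | hk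
  · simpa using hasDerivAt_id x
  · have hd : HasDerivAt (fun y : ℝ => 1 - 2 ^ k * (1 / 2 - y)) (2 ^ k) x := by
      exact ((((hasDerivAt_id x).const_sub (1 / 2)).const_mul ((2 : ℝ) ^ k)).const_sub 1).congr_deriv
        (by simp)
    refine hd.congr_of_eventuallyEq ?_
    have h2 : ∀ᶠ y in nhds x, (2 : ℝ) ^ k * (1 / 2 - y) < 1 :=
      (by fun_prop : Continuous fun y : ℝ => (2 : ℝ) ^ k * (1 / 2 - y)).continuousAt.eventually_lt
        continuousAt_const h
    filter_upwards [h2, eventually_lt_nhds hx] with y hy1 hy2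
    exact dbl_iterate hy2 hk hy1

/-- Distance of the orbit to the singularity `1` of `φ'`; an equality for `k ≥ 1`. -/
lemma le_one_sub_dbl_iterate {x : ℝ} (hx : x < 1 / 2) (k : ℕ)
    (h : (2 : ℝ) ^ k * (1 / 2 - x) < 1) : 2 ^ k * (1 / 2 - x) ≤ 1 - dbl^[k] x := by
  rcases Nat.eq_zero_or_pos k with rfl | hk
  · simp only [pow_zero, one_mul, Function.iterate_zero, id_eq]
    linarith
  · rw [dbl_iterate hx hk h]
    linarith

/-- Bound for the summand of index `k = ℓ - 1 - j`, for which `2^{k-ℓ} = 2^{-(j+1)}` and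
`u = 1 - f^k x` is at least `2^{-(j+2)}`. -/
lemma term_bound {a : ℝ} (ha : a ∈ Set.Ioo (0 : ℝ) 1) (j : ℕ) {u : ℝ}
    (hu : (1 / 2 : ℝ) ^ (j + 2) ≤ u) :
    (1 / 2 : ℝ) ^ (j + 1) * (a * u ^ (a - 1)) ≤ 2 * ((1 / 2 : ℝ) ^ a) ^ j := by
  obtain ⟨ha0, ha1⟩ := ha
  have hv : (0 : ℝ) < (1 / 2 : ℝ) ^ (j + 2) := by positivity
  have h1 : u ^ (a - 1) ≤ ((1 / 2 : ℝ) ^ (j + 2)) ^ (a - 1) :=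
    Real.rpow_le_rpow_of_nonpos hv hu (by linarith)
  have h2 : a * u ^ (a - 1) ≤ ((1 / 2 : ℝ) ^ (j + 2)) ^ (a - 1) := by
    have : 0 ≤ u ^ (a - 1) := Real.rpow_nonneg (hv.le.trans hu) _
    nlinarith
  have hr0 : (0 : ℝ) ≤ (1 / 2 : ℝ) ^ a := by positivity
  have hr1 : (1 / 2 : ℝ) ^ a ≤ 1 := Real.rpow_le_one (by norm_num) (by norm_num) ha0.le
  calc (1 / 2 : ℝ) ^ (j + 1) * (a * u ^ (a - 1))
      ≤ (1 / 2 : ℝ) ^ (j + 1) * ((1 / 2 : ℝ) ^ (j + 2)) ^ (a - 1) := by gcongr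
    _ = 2 * ((1 / 2 : ℝ) ^ (j + 2)) ^ a := by
        rw [Real.rpow_sub_one hv.ne', pow_succ _ (j + 1)]
        field_simp
    _ = 2 * ((1 / 2 : ℝ) ^ a) ^ (j + 2) := by
        rw [← Real.rpow_natCast, ← Real.rpow_natCast, ← Real.rpow_mul (by norm_num),
          ← Real.rpow_mul (by norm_num), mul_comm a]
    _ ≤ 2 * ((1 / 2 : ℝ) ^ a) ^ j := by
        gcongr 2 * ?_
        exact pow_le_pow_of_le_one hr0 hr1 (by omega)

/-- For the doubling map with `Y_ℓ = (1/2 − 2^{−ℓ}, 1/2 − 2^{−(ℓ+1)})`, return time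
`R = ℓ` on `Y_ℓ` (so that `F = f^ℓ` on `Y_ℓ` and `F′ = 2^ℓ`), `φ(x) = (1−x)^a` with
`a ∈ (0,1)` and induced fibre map `Φ(x) = Σ_{k=0}^{ℓ−1} φ(f^k x)` on `Y_ℓ`, the induced
skew-product has bounded twist: there is `C′ > 0` such that for every `ℓ ≥ 1` and every
`x ∈ Y_ℓ`, `|Φ′(x)|·2^{−ℓ} ≤ C′`, i.e. `‖DΦ(x)·DF(x)⁻¹‖` is uniformly bounded on `Y`. -/
theorem induced_fibre_bounded_twist (a : ℝ) (ha : a ∈ Set.Ioo (0 : ℝ) 1) :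
    ∃ C' > (0 : ℝ), ∀ ℓ : ℕ, 1 ≤ ℓ → ∀ x ∈ Set.Ioo (aPt ℓ) (aPt (ℓ + 1)),
      |deriv (fun y => ∑ k ∈ Finset.range ℓ, (1 - dbl^[k] y) ^ a) x| * ((2 : ℝ) ^ ℓ)⁻¹ ≤ C' := by
  have hr0 : (0 : ℝ) ≤ (1 / 2 : ℝ) ^ a := by positivity
  have hr1 : (1 / 2 : ℝ) ^ a < 1 := Real.rpow_lt_one (by norm_num) (by norm_num) ha.1
  refine ⟨2 / (1 - (1 / 2 : ℝ) ^ a), div_pos two_pos (by linarith), ?_⟩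
  rintro ℓ - x ⟨hxl, hxr⟩
  unfold aPt at hxl hxr
  have hx : x < 1 / 2 := by
    have : (0 : ℝ) < ((2 : ℝ) ^ (ℓ + 1))⁻¹ := by positivity
    linarith
  have hlt : (2 : ℝ) ^ ℓ * (1 / 2 - x) < 1 := by
    have h : 1 / 2 - x < ((2 : ℝ) ^ ℓ)⁻¹ := by linarith
    calc (2 : ℝ) ^ ℓ * (1 / 2 - x) < 2 ^ ℓ * ((2 : ℝ) ^ ℓ)⁻¹ := by gcongr
      _ = 1 := mul_inv_cancel₀ (by positivity)
  have hk : ∀ k ∈ Finset.range ℓ, (2 : ℝ) ^ k * (1 / 2 - x) < 1 := by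
    intro k hk
    refine lt_of_le_of_lt ?_ hlt
    have : 0 ≤ 1 / 2 - x := by linarith
    have := (Finset.mem_range.mp hk).le
    gcongr
    norm_num
  have hupos : ∀ k ∈ Finset.range ℓ, 0 < 1 - dbl^[k] x := fun k h =>
    lt_of_lt_of_le (mul_pos (by positivity) (by linarith)) (le_one_sub_dbl_iterate hx k (hk k h))
  have hd : HasDerivAt (fun y => ∑ k ∈ Finset.range ℓ, (1 - dbl^[k] y) ^ a)
      (∑ k ∈ Finset.range ℓ, -(2 : ℝ) ^ k * a * (1 - dbl^[k] x) ^ (a - 1)) x := by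
    refine HasDerivAt.fun_sum fun k h => ?_
    exact ((hasDerivAt_dbl_iterate hx k (hk k h)).const_sub 1).rpow_const (Or.inl (hupos k h).ne')
  rw [hd.deriv]
  have habs : |∑ k ∈ Finset.range ℓ, -(2 : ℝ) ^ k * a * (1 - dbl^[k] x) ^ (a - 1)| ≤
      ∑ k ∈ Finset.range ℓ, (2 : ℝ) ^ k * a * (1 - dbl^[k] x) ^ (a - 1) := by
    refine (Finset.abs_sum_le_sum_abs _ _).trans (Finset.sum_le_sum fun k h => ?_)
    have := Real.rpow_nonneg (hupos k h).le (a - 1)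
    rw [abs_mul, abs_mul, abs_neg, abs_of_pos ha.1, abs_of_nonneg this,
      abs_of_pos (by positivity : (0 : ℝ) < 2 ^ k)]
  calc _ ≤ (∑ k ∈ Finset.range ℓ, (2 : ℝ) ^ k * a * (1 - dbl^[k] x) ^ (a - 1)) *
        ((2 : ℝ) ^ ℓ)⁻¹ := by gcongr
    _ ≤ ∑ k ∈ Finset.range ℓ, 2 * ((1 / 2 : ℝ) ^ a) ^ (ℓ - 1 - k) := by
        rw [Finset.sum_mul]
        refine Finset.sum_le_sum fun k h => ?_
        obtain ⟨j, rfl⟩ : ∃ j, ℓ = k + j + 1 := by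
          have := Finset.mem_range.mp h
          exact ⟨ℓ - 1 - k, by omega⟩
        have e : k + j + 1 - 1 - k = j := by omega
        have hu : (1 / 2 : ℝ) ^ (j + 2) ≤ 1 - dbl^[k] x := by
          refine le_trans ?_ (le_one_sub_dbl_iterate hx k (hk k h))
          have ht : ((2 : ℝ) ^ (k + j + 1 + 1))⁻¹ ≤ 1 / 2 - x := by linarith
          calc (1 / 2 : ℝ) ^ (j + 2) = 2 ^ k * ((2 : ℝ) ^ (k + j + 1 + 1))⁻¹ := by
                rw [one_div, inv_pow, show k + j + 1 + 1 = k + (j + 2) by ring, pow_add _ k]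
                field_simp
            _ ≤ _ := by gcongr
        rw [e]
        refine le_trans (le_of_eq ?_) (term_bound ha j hu)
        rw [one_div, inv_pow, show k + j + 1 = k + (j + 1) by ring, pow_add _ k]
        field_simp
    _ = 2 * ∑ j ∈ Finset.range ℓ, ((1 / 2 : ℝ) ^ a) ^ j := by
        rw [Finset.sum_range_reflect (fun j => 2 * ((1 / 2 : ℝ) ^ a) ^ j), Finset.mul_sum]
    _ ≤ 2 * (1 - (1 / 2 : ℝ) ^ a)⁻¹ := by
        rw [← tsum_geometric_of_lt_one hr0 hr1]
        gcongr
        exact (summable_geometric_of_lt_one hr0 hr1).sum_le_tsum _ fun j _ => pow_nonneg hr0 j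
    _ = 2 / (1 - (1 / 2 : ℝ) ^ a) := (div_eq_mul_inv _ _).symm
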